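/- Let D be a strongly connected digraph of order n ≥ 3. If D has at least n − 1 vertices of degree at least n, then D is Hamiltonian or contains a directed cycle of length n − 1. -/

import Mathlib

/-!
Basic definitions for finite digraphs (no loops, no multiple arcs), where the arc
relation is `A : V → V → Prop`.  Paths and cycles are given as lists of (distinct)
vertices.
-/

variable {V : Type*}

/-- A (directed) path, given by the list of its vertices. -/
def IsPathOn (A : V → V → Prop) (l : List V) : Prop :=
  l ≠ [] ∧ l.Nodup ∧ l.Chain' A

/-- A (directed) cycle, given by the list of its vertices; its length (number of
arcs) equals the length of the list. -/
def IsCycleOn (A : V → V → Prop) (l : List V) : Prop :=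
  2 ≤ l.length ∧ l.Nodup ∧ l.Chain' A ∧
    ∀ a ∈ l.getLast?, ∀ b ∈ l.head?, A a b

/-- A directed path from `a` to `b`. -/
def IsPathFromTo (A : V → V → Prop) (l : List V) (a b : V) : Prop :=
  IsPathOn A l ∧ l.head? = some a ∧ l.getLast? = some b

/-- Out-degree `d⁺(x)`. -/
noncomputable def outDeg (A : V → V → Prop) (x : V) : ℕ := {y | A x y}.ncard

/-- In-degree `d⁻(x)`. -/
noncomputable def inDeg (A : V → V → Prop) (x : V) : ℕ := {y | A y x}.ncard

/-- Degree `d(x) = d⁺(x) + d⁻(x)`. -/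
noncomputable def deg (A : V → V → Prop) (x : V) : ℕ := outDeg A x + inDeg A x

/-- Out-degree into a set, `d⁺(x, S)`. -/
noncomputable def outDegOn (A : V → V → Prop) (x : V) (S : Set V) : ℕ :=
  {y ∈ S | A x y}.ncard

/-- In-degree from a set, `d⁻(x, S)`. -/
noncomputable def inDegOn (A : V → V → Prop) (x : V) (S : Set V) : ℕ :=
  {y ∈ S | A y x}.ncard

/-- Degree with respect to a set, `d(x, S) = d⁺(x, S) + d⁻(x, S)`. -/
noncomputable def degOn (A : V → V → Prop) (x : V) (S : Set V) : ℕ :=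
  outDegOn A x S + inDegOn A x S

/-- Two distinct vertices are adjacent if there is an arc between them in some
direction. -/
def DAdj (A : V → V → Prop) (x y : V) : Prop := A x y ∨ A y x

/-- `D` is `S`-strongly connected: between any two distinct vertices of `S` there
are directed paths in both directions. -/
def SetStronglyConnected (A : V → V → Prop) (S : Set V) : Prop :=
  ∀ x ∈ S, ∀ y ∈ S, x ≠ y → ∃ l, IsPathFromTo A l x y

/-- Strong connectivity. -/
def StronglyConnected (A : V → V → Prop) : Prop :=
  ∀ x y : V, x ≠ y → ∃ l, IsPathFromTo A l x y

/-- 2-strong connectivity: at least 3 vertices, and deleting any vertex leaves a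
strongly connected digraph. -/
def TwoStronglyConnected [Fintype V] (A : V → V → Prop) : Prop :=
  3 ≤ Fintype.card V ∧
    ∀ w x y : V, x ≠ w → y ≠ w → x ≠ y → ∃ l, IsPathFromTo A l x y ∧ w ∉ l

/-- Condition `A₀` for a set `Y` of vertices. -/
def CondA0 [Fintype V] (A : V → V → Prop) (Y : Set V) : Prop :=
  ∀ x ∈ Y, ∀ y ∈ Y, ∀ z ∈ Y,
    x ≠ y → x ≠ z → y ≠ z → ¬ DAdj A x y →
      (¬ A x z →
        deg A x + deg A y + outDeg A x + inDeg A z ≥ 3 * Fintype.card V - 2) ∧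
      (¬ A z x →
        deg A x + deg A y + inDeg A x + outDeg A z ≥ 3 * Fintype.card V - 2)

/-- A `C`-bypass: a path of length at least two whose end-vertices lie on the
cycle `c` and whose internal vertices avoid `c`. -/
def IsBypass (A : V → V → Prop) (c p : List V) : Prop :=
  IsPathOn A p ∧ 3 ≤ p.length ∧
    (∀ a ∈ p.head?, a ∈ c) ∧ (∀ b ∈ p.getLast?, b ∈ c) ∧
    ∀ v ∈ p.tail.dropLast, v ∉ c

/-- The vertex `y` can be inserted into the path `p`. -/
def CanInsert (A : V → V → Prop) (p : List V) (y : V) : Prop :=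
  ∃ i, ∃ h : i + 1 < p.length, A (p[i]'(Nat.lt_of_succ_lt h)) y ∧ A y (p[i+1]'h)

/-- A `(C, x)`-path: a path from a vertex `u` of the cycle `c` to `x`, meeting `c`
only in `u`. -/
def IsCtoXPath (A : V → V → Prop) (c l : List V) (u x : V) : Prop :=
  IsPathFromTo A l u x ∧ u ∈ c ∧ ∀ v ∈ l, v ∈ c → v = u

/-- An `(x, C)`-path: a path from `x` to a vertex `v` of the cycle `c`, meeting `c`
only in `v`. -/
def IsXtoCPath (A : V → V → Prop) (c l : List V) (x v : V) : Prop :=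
  IsPathFromTo A l x v ∧ v ∈ c ∧ ∀ w ∈ l, w ∈ c → w = v

/-!
Replace the arc relation by its reflexive closure `r`: every degree grows by `2`, and a single
vertex becomes a closed chain. Let `M` be the set of vertices of `r`-degree at least `n + 2`, so
that at most one vertex is missing from it, and choose a closed chain `C` whose trace on `M` is
inclusion-maximal.

Suppose that a detour with a vertex `v` of `M` outside `C` leaves `C` at `a` and returns at `b`,
with the gap between `a` and `b` on `C` as short as possible. Let `L` be the rest of `C`, a path
from `b` to `a`, and insert gap vertices into it one by one as long as possible, giving a path `P`.
Closing `P` by the detour would contradict maximality unless some `c` in the gap and in `M` is left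
over. A vertex that cannot be inserted into a path has at most one arc more than the path has
vertices; this applies to `v` and `L`, and to `c` and `P`. As the gap is shortest, no detour leads
from `a` to `c` or from `c` to `b`, so there are no arcs between `v` and the gap and few from `v` or
`c` to the outside. Altogether `d(v) + d(c) ≤ 2n + 3`, a contradiction.

So there are no detours, and by strong connectivity no arcs between `C` and the vertices of `M`
outside it. If there were such a vertex `v`, then `d(v) + d(c) ≤ 2n + 2` for any `c` in `C` and `M`,
again a contradiction. Hence `C` contains `M`.
-/

open Finset

section Arcs

variable {r : V → V → Prop} {x y w : V}

/-- The number of arcs between `x` and `u`, both directions counted; a loop at `x = u` counts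
twice, in accordance with `deg`. -/
noncomputable def arcCount (r : V → V → Prop) (x u : V) : ℕ :=
  open Classical in (if r x u then 1 else 0) + (if r u x then 1 else 0)

lemma arcCount_comm (r : V → V → Prop) (x u : V) : arcCount r x u = arcCount r u x :=
  Nat.add_comm _ _

lemma arcCount_eq_zero (h : ¬ r x y) (h' : ¬ r y x) : arcCount r x y = 0 := by
  simp only [arcCount, h, h', if_false]

lemma arcCount_le_one (h : ¬ (r x y ∧ r y x)) : arcCount r x y ≤ 1 := by
  unfold arcCount; split_ifs <;> first | omega | tauto

lemma arcCount_le_two (r : V → V → Prop) (x u : V) : arcCount r x u ≤ 2 := by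
  unfold arcCount; split_ifs <;> omega

lemma arcCount_add_arcCount_le_two (h : ¬ (r x w ∧ r w y)) (h' : ¬ (r y w ∧ r w x)) :
    arcCount r x w + arcCount r y w ≤ 2 := by
  unfold arcCount; split_ifs <;> first | omega | tauto

lemma sum_arcCount_le (r : V → V → Prop) (x : V) (S : Finset V) :
    ∑ u ∈ S, arcCount r x u ≤ 2 * #S := by
  rw [mul_comm]
  exact sum_le_card_nsmul _ _ _ fun u _ => arcCount_le_two r x u

lemma sum_arcCount [Fintype V] (r : V → V → Prop) (x : V) :
    ∑ u, arcCount r x u = deg r x := by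
  classical
  simp [arcCount, sum_add_distrib, deg, outDeg, inDeg, Set.ncard_eq_toFinset_card']

lemma deg_reflGen [Finite V] {A : V → V → Prop} (hA : ¬ A x x) :
    deg (Relation.ReflGen A) x = deg A x + 2 := by
  have hout : {y | Relation.ReflGen A x y} = insert x {y | A x y} := by
    ext y; simp [Relation.reflGen_iff]
  have hin : {y | Relation.ReflGen A y x} = insert x {y | A y x} := by
    ext y; simp [Relation.reflGen_iff, eq_comm]
  rw [deg, deg, outDeg, inDeg, outDeg, inDeg, hout, hin, Set.ncard_insert_of_notMem (by exact hA),
    Set.ncard_insert_of_notMem (by exact hA)]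
  omega

end Arcs

section Paths

variable {r s : V → V → Prop} {a b v : V} {L : List V}

lemma IsPathFromTo.mono (hrs : ∀ x y, r x y → s x y) (h : IsPathFromTo r L a b) :
    IsPathFromTo s L a b :=
  ⟨⟨h.1.1, h.1.2.1, h.1.2.2.imp hrs⟩, h.2⟩

lemma IsPathFromTo.reverse (h : IsPathFromTo r L a b) : IsPathFromTo (flip r) L.reverse b a := by
  obtain ⟨⟨hne, hnd, hc⟩, ha, hb⟩ := h
  exact ⟨⟨by simpa using hne, by simpa using hnd, List.isChain_reverse.2 hc⟩, by simpa using hb,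
    by simpa using ha⟩

lemma StronglyConnected.mono (hrs : ∀ x y, r x y → s x y) (h : StronglyConnected r) :
    StronglyConnected s :=
  fun x y hxy => (h x y hxy).imp fun _ => IsPathFromTo.mono hrs

lemma StronglyConnected.flip (h : StronglyConnected r) : StronglyConnected (flip r) :=
  fun x y hxy => let ⟨l, hl⟩ := h y x hxy.symm; ⟨l.reverse, hl.reverse⟩

lemma not_canInsert_iff : ¬ CanInsert r L v ↔ L.IsChain fun u w => ¬ (r u v ∧ r v w) := by
  simp only [CanInsert, List.isChain_iff_getElem, not_exists]

lemma CanInsert.exists_isPathFromTo (h : CanInsert r L v) (hL : IsPathFromTo r L a b)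
    (hv : v ∉ L) : ∃ L', IsPathFromTo r L' a b ∧ L'.Perm (v :: L) := by
  rw [← not_not (a := CanInsert r L v), not_canInsert_iff,
    List.isChain_iff_forall_rel_of_append_cons_cons] at h
  push Not at h
  obtain ⟨u, w, l₁, l₂, rfl, huv, hvw⟩ := h
  obtain ⟨⟨-, hnd, hc⟩, ha, hb⟩ := hL
  have hperm : (l₁ ++ u :: v :: w :: l₂).Perm (v :: (l₁ ++ u :: w :: l₂)) := by
    simpa using List.perm_middle (a := v) (l₁ := l₁ ++ [u]) (l₂ := w :: l₂)
  refine ⟨l₁ ++ u :: v :: w :: l₂, ⟨⟨by simp, ?_, ?_⟩, ?_, ?_⟩, hperm⟩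
  · exact hperm.nodup_iff.2 (List.nodup_cons.2 ⟨hv, hnd⟩)
  · have hc' := List.isChain_append_cons_cons.1 hc
    exact List.isChain_append_cons_cons.2 ⟨hc'.1, huv, hc'.2.2.cons_cons hvw⟩
  · simpa [List.head?_append] using ha
  · simpa [List.getLast?_append] using hb

lemma exists_isPathFromTo_forall_not_canInsert (T : Finset V) (hL : IsPathFromTo r L a b) :
    ∃ P, IsPathFromTo r P a b ∧ L ⊆ P ∧ (∀ x ∈ P, x ∈ L ∨ x ∈ T) ∧
      ∀ c ∈ T, c ∉ P → ¬ CanInsert r P c := by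
  classical
  induction T using Finset.strongInduction generalizing L with
  | H T ih =>
    by_cases hsat : ∀ c ∈ T, c ∉ L → ¬ CanInsert r L c
    · exact ⟨L, hL, List.Subset.refl L, fun x hx => Or.inl hx, hsat⟩
    push Not at hsat
    obtain ⟨c, hcT, hcL, hins⟩ := hsat
    obtain ⟨L', hL', hperm⟩ := hins.exists_isPathFromTo hL hcL
    obtain ⟨P, hP, hsub, hPT, hPsat⟩ := ih (T.erase c) (erase_ssubset hcT) hL'
    have hcP : c ∈ P := hsub (hperm.mem_iff.2 List.mem_cons_self)
    refine ⟨P, hP, fun x hx => hsub (hperm.mem_iff.2 (List.mem_cons_of_mem c hx)),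
      fun x hx => ?_, fun d hdT hdP => hPsat d (mem_erase.2 ⟨?_, hdT⟩) hdP⟩
    · rcases hPT x hx with h | h
      · rcases List.mem_cons.1 (hperm.mem_iff.1 h) with rfl | h
        exacts [Or.inr hcT, Or.inl h]
      · exact Or.inr (mem_of_mem_erase h)
    · exact fun hdc => hdP (hdc ▸ hcP)

lemma sum_map_arcCount_le {h : V} {t : List V} (hins : ¬ CanInsert r (h :: t) v) :
    ((h :: t).map (arcCount r v)).sum ≤
      (h :: t).length + (open Classical in if r v h then 1 else 0) := by
  classical
  rw [not_canInsert_iff] at hins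
  induction t generalizing h with
  | nil => simp only [arcCount, List.map_cons, List.map_nil, List.sum_cons, List.sum_nil,
      List.length_singleton]; split_ifs <;> omega
  | cons h' t ih =>
    obtain ⟨hhead, htail⟩ := List.isChain_cons_cons.1 hins
    have hstep : arcCount r v h + (if r v h' then 1 else 0) ≤ 1 + (if r v h then 1 else 0) := by
      unfold arcCount; split_ifs <;> first | omega | tauto
    have := ih htail
    rw [List.map_cons, List.sum_cons, List.length_cons]
    omega

lemma sum_arcCount_le_length_add_one [DecidableEq V] (hnd : L.Nodup) (hins : ¬ CanInsert r L v) :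
    ∑ u ∈ L.toFinset, arcCount r v u ≤ L.length + 1 := by
  rw [List.sum_toFinset _ hnd]
  rcases L with _ | ⟨h, t⟩
  · simp
  · exact (sum_map_arcCount_le hins).trans (by split_ifs <;> omega)

end Paths

section ClosedChains

variable {r : V → V → Prop} {a b : V} {L g : List V}

/-- A cyclic sequence of distinct vertices, each followed by an `r`-successor. This is `IsCycleOn`
without the bound on the length, so that, for reflexive `r`, a single vertex qualifies. -/
def IsClosedChain (r : V → V → Prop) (l : List V) : Prop :=
  l.Nodup ∧ l.IsChain r ∧ ∀ a ∈ l.getLast?, ∀ b ∈ l.head?, r a b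

lemma isClosedChain_append_iff (hL : IsPathFromTo r L b a) :
    IsClosedChain r (L ++ g) ↔ (L ++ g).Nodup ∧ (a :: (g ++ [b])).IsChain r := by
  obtain ⟨⟨-, -, hc⟩, hb, ha⟩ := hL
  have hc : L.IsChain r := hc
  rcases g with _ | ⟨x, g⟩
  · simp [IsClosedChain, hb, ha, hc]
  · rw [← List.cons_append, List.isChain_append]
    simp only [IsClosedChain, List.isChain_append, hc, ha, Option.mem_def, Option.some.injEq,
      List.head?_cons, forall_eq', true_and, List.getLast?_append, List.getLast?_cons,
      Option.or_some, Option.getD_some, List.head?_append, hb, List.isChain_cons_cons,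
      List.IsChain.singleton, and_congr_right_iff, and_congr_left_iff]
    tauto

lemma IsClosedChain.append_comm (h : IsClosedChain r (L ++ g)) : IsClosedChain r (g ++ L) := by
  obtain ⟨hnd, hc, hcl⟩ := h
  refine ⟨List.nodup_append_comm.1 hnd, ?_⟩
  rcases L with _ | ⟨a, L⟩
  · simp_all
  rcases g with _ | ⟨b, g⟩
  · simp_all
  simp only [List.isChain_append, List.head?_append, List.getLast?_append, List.head?_cons,
    List.getLast?_cons, Option.some_or] at hc hcl ⊢
  tauto

lemma IsClosedChain.isPathFromTo (h : IsClosedChain r (L ++ g)) (hb : L.head? = some b)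
    (ha : L.getLast? = some a) : IsPathFromTo r L b a :=
  ⟨⟨by rintro rfl; simp at hb, h.1.of_append_left, h.2.1.left_of_append⟩, hb, ha⟩

lemma IsClosedChain.isCycleOn {A : V → V → Prop} {l : List V}
    (h : IsClosedChain (Relation.ReflGen A) l) (hlen : 2 ≤ l.length) : IsCycleOn A l := by
  obtain ⟨hnd, hc, hcl⟩ := h
  have harc : ∀ {x y}, Relation.ReflGen A x y → x ≠ y → A x y := fun h hne =>
    ((Relation.reflGen_iff A _ _).1 h).resolve_left hne.symm
  refine ⟨hlen, hnd, ?_, fun x hx y hy => harc (hcl x hx y hy) ?_⟩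
  · refine List.isChain_iff_getElem.2 fun i hi => harc (List.isChain_iff_getElem.1 hc i hi) ?_
    simp [hnd.getElem_inj_iff]
  · rw [Option.mem_def, List.getLast?_eq_getElem?, List.getElem?_eq_some_iff] at hx
    rw [Option.mem_def, List.head?_eq_getElem?, List.getElem?_eq_some_iff] at hy
    obtain ⟨hx, rfl⟩ := hx
    obtain ⟨hy, rfl⟩ := hy
    rw [Ne, hnd.getElem_inj_iff]
    omega

end ClosedChains

section Detours

variable {r : V → V → Prop} {S : Finset V} {M : Set V} {a b c v w : V} {Q Q₁ Q₂ : List V}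

/-- `a, Q, b` is a walk whose internal vertices `Q` are distinct, avoid `S` and include a vertex
of `M`. For `S` the vertex set of a cycle through `a` and `b` this is a bypass of that cycle,
except that `a = b` is allowed. -/
structure IsDetour (r : V → V → Prop) (S : Finset V) (M : Set V) (a b : V) (Q : List V) :
    Prop where
  isChain : (a :: (Q ++ [b])).IsChain r
  nodup : Q.Nodup
  notMem : ∀ x ∈ Q, x ∉ S
  exists_mem : ∃ x ∈ Q, x ∈ M

namespace IsDetour

lemma reverse (h : IsDetour r S M a b Q) : IsDetour (flip r) S M b a Q.reverse where
  isChain := by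
    have hc : (a :: (Q ++ [b])).reverse.IsChain (flip r) := List.isChain_reverse.2 h.isChain
    simpa using hc
  nodup := List.nodup_reverse.2 h.nodup
  notMem := by simpa using h.notMem
  exists_mem := by simpa using h.exists_mem

lemma truncate (h : IsDetour r S M a b (Q₁ ++ w :: Q₂)) (hM : ∃ x ∈ Q₁ ++ [w], x ∈ M)
    (hwc : r w c) : IsDetour r S M a c (Q₁ ++ [w]) where
  isChain := by
    have hc : (a :: Q₁ ++ w :: (Q₂ ++ [b])).IsChain r := by simpa using h.isChain
    simpa using List.isChain_append_cons_cons.2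
      ⟨(List.isChain_split.1 hc).1, hwc, List.isChain_singleton c⟩
  nodup := h.nodup.sublist (by simp)
  notMem x hx := h.notMem x (by simp only [List.mem_append, List.mem_cons] at hx ⊢; tauto)
  exists_mem := hM

lemma extend (h : IsDetour r S M a w Q) (hwQ : w ∉ Q) (hwS : w ∉ S) (hwc : r w c) :
    IsDetour r S M a c (Q ++ [w]) where
  isChain := by
    have hc : (a :: Q ++ [w]).IsChain r := h.isChain
    simpa using List.isChain_append_cons_cons.2 ⟨hc, hwc, List.isChain_singleton c⟩
  nodup := List.nodup_append_comm.1 (List.nodup_cons.2 ⟨hwQ, h.nodup⟩)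
  notMem x hx := by
    rcases List.mem_append.1 hx with hx | hx
    exacts [h.notMem x hx, List.mem_singleton.1 hx ▸ hwS]
  exists_mem := h.exists_mem.imp fun x hx => ⟨List.mem_append_left _ hx.1, hx.2⟩

lemma not_rel (h : IsDetour r S M a b Q) (hac : ∀ Q, ¬ IsDetour r S M a c Q) (hv : v ∈ Q)
    (hvM : v ∈ M) : ¬ r v c := by
  obtain ⟨Q₁, Q₂, rfl⟩ := List.append_of_mem hv
  exact fun hvc => hac _ (h.truncate ⟨v, by simp, hvM⟩ hvc)

lemma not_rel_and_rel_of_notMem (h : IsDetour r S M a b Q) (hac : ∀ Q, ¬ IsDetour r S M a c Q)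
    (hv : v ∈ Q) (hvM : v ∈ M) (hwQ : w ∉ Q) (hwS : w ∉ S) : ¬ (r v w ∧ r w c) := by
  rintro ⟨hvw, hwc⟩
  obtain ⟨Q₁, Q₂, rfl⟩ := List.append_of_mem hv
  refine hac _ ((h.truncate ⟨v, by simp, hvM⟩ hvw).extend ?_ hwS hwc)
  simp only [List.mem_append, List.mem_cons] at hwQ ⊢
  tauto

section

variable (h : IsDetour r S M a b Q) (hac : ∀ Q, ¬ IsDetour r S M a c Q)
  (hcb : ∀ Q, ¬ IsDetour r S M c b Q)

include h hac hcb

lemma not_rel_and_rel_of_mem (hw : w ∈ Q) : ¬ (r w c ∧ r c w) := by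
  rintro ⟨hwc, hcw⟩
  obtain ⟨Q₁, Q₂, rfl⟩ := List.append_of_mem hw
  obtain ⟨v, hv, hvM⟩ := h.exists_mem
  rcases List.mem_append.1 hv with hv | hv
  · exact hac _ (h.truncate ⟨v, List.mem_append_left _ hv, hvM⟩ hwc)
  · have hrev : IsDetour (flip r) S M b a (Q₂.reverse ++ w :: Q₁.reverse) := by
      simpa using h.reverse
    exact hcb _ (hrev.truncate ⟨v, by simpa [or_comm] using hv, hvM⟩ hcw).reverse

lemma arcCount_eq_zero (hv : v ∈ Q) (hvM : v ∈ M) : arcCount r v c = 0 :=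
  _root_.arcCount_eq_zero (h.not_rel hac hv hvM)
    (h.reverse.not_rel (fun _ hQ => hcb _ hQ.reverse) (List.mem_reverse.2 hv) hvM)

lemma arcCount_add_arcCount_le_two (hv : v ∈ Q) (hvM : v ∈ M) (hwS : w ∉ S)
    (hw : w ∈ Q → w ∈ M) : arcCount r v w + arcCount r c w ≤ 2 := by
  by_cases hwQ : w ∈ Q
  · rw [arcCount_comm r c w, h.arcCount_eq_zero hac hcb hwQ (hw hwQ)]
    exact arcCount_le_two r v w
  · exact _root_.arcCount_add_arcCount_le_two
      (h.not_rel_and_rel_of_notMem hac hv hvM hwQ hwS)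
      fun hcv => h.reverse.not_rel_and_rel_of_notMem (fun _ hQ => hcb _ hQ.reverse)
        (List.mem_reverse.2 hv) hvM (by simpa using hwQ) hwS hcv.symm

lemma arcCount_add_arcCount_le_three (hv : v ∈ Q) (hvM : v ∈ M) (hwS : w ∉ S) :
    arcCount r v w + arcCount r c w ≤ 3 := by
  by_cases hwQ : w ∈ Q
  · have := arcCount_le_one (h.not_rel_and_rel_of_mem hac hcb hwQ)
    have := arcCount_le_two r v w
    rw [arcCount_comm r c w]
    omega
  · have := h.arcCount_add_arcCount_le_two hac hcb hv hvM hwS fun hw => absurd hw hwQ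
    omega

lemma sum_arcCount_compl_le [Fintype V] [DecidableEq V] (hM : Mᶜ.Subsingleton) (hv : v ∈ Q)
    (hvM : v ∈ M) :
    ∑ w ∈ Sᶜ, arcCount r v w + ∑ w ∈ Sᶜ, arcCount r c w ≤ 2 * #Sᶜ + 1 := by
  classical
  rw [← sum_add_distrib]
  calc ∑ w ∈ Sᶜ, (arcCount r v w + arcCount r c w)
      ≤ ∑ w ∈ Sᶜ, (2 + if w ∈ M then 0 else 1) := by
        refine sum_le_sum fun w hw => ?_
        split_ifs with hwM
        · exact h.arcCount_add_arcCount_le_two hac hcb hv hvM (mem_compl.1 hw) fun _ => hwM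
        · exact h.arcCount_add_arcCount_le_three hac hcb hv hvM (mem_compl.1 hw)
    _ = 2 * #Sᶜ + #{w ∈ Sᶜ | w ∉ M} := by
        simp [sum_add_distrib, card_filter, mul_comm, ite_not]
    _ ≤ 2 * #Sᶜ + 1 := by
        gcongr
        exact card_le_one.2 fun x hx y hy => hM (mem_filter.1 hx).2 (mem_filter.1 hy).2

end

end IsDetour

lemma exists_isDetour (hconn : StronglyConnected r) {s : V} (hs : s ∈ S) (hvS : v ∉ S)
    (hvM : v ∈ M) (hsv : r s v) : ∃ y ∈ S, ∃ Q, IsDetour r S M s y Q := by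
  classical
  obtain ⟨p, ⟨-, hnd, hc⟩, hpv, hps⟩ := hconn v s fun hvs => hvS (hvs ▸ hs)
  obtain ⟨y, hy⟩ : ∃ y, p.find? (· ∈ S) = some y :=
    Option.isSome_iff_exists.1 (List.find?_isSome.2 ⟨s, List.mem_of_getLast? hps, by simpa⟩)
  obtain ⟨hyS, Q, t, rfl, hQ⟩ := List.find?_eq_some_iff_append.1 hy
  obtain ⟨Q, rfl⟩ : ∃ Q', Q = v :: Q' := by
    rcases Q with _ | ⟨x, Q⟩
    · simp_all
    · exact ⟨Q, by simp_all⟩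
  refine ⟨y, by simpa using hyS, v :: Q, ?_, hnd.of_append_left, by simpa using hQ, v, by simp, hvM⟩
  have hc : (v :: Q ++ y :: t).IsChain r := hc
  exact List.isChain_cons_cons.2 ⟨hsv, (List.isChain_split.1 hc).1⟩

end Detours

section MaximalClosedChains

variable {r : V → V → Prop} {M : Set V} {a b c v : V} {C L Q g : List V}

/-- A closed chain whose set of vertices in `M` is maximal with respect to inclusion. -/
structure IsMaximalClosedChain (r : V → V → Prop) (M : Set V) (C : List V) : Prop where
  isClosedChain : IsClosedChain r C
  mem_of_forall_mem : ∀ ⦃l⦄, IsClosedChain r l → (∀ x ∈ C, x ∈ M → x ∈ l) →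
    ∀ ⦃v⦄, v ∈ l → v ∈ M → v ∈ C

lemma exists_isMaximalClosedChain [Finite V] (M : Set V) (hC : IsClosedChain r C) :
    ∃ C', IsMaximalClosedChain r M C' ∧ ∀ x ∈ C, x ∈ M → x ∈ C' := by
  obtain ⟨T, hT, ⟨C', hC', rfl⟩, hmax⟩ := Finite.exists_le_maximal
    (p := fun T : Set V => ∃ l, IsClosedChain r l ∧ {x | x ∈ l ∧ x ∈ M} = T) ⟨C, hC, rfl⟩
  exact ⟨C', ⟨hC', fun l hl hsub v hv hvM =>
    (hmax ⟨l, hl, rfl⟩ (fun x hx => ⟨hsub x hx.1 hx.2, hx.2⟩) ⟨hv, hvM⟩).1⟩,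
    fun x hx hxM => (hT ⟨hx, hxM⟩).1⟩

namespace IsMaximalClosedChain

lemma append_comm (h : IsMaximalClosedChain r M (L ++ g)) : IsMaximalClosedChain r M (g ++ L) where
  isClosedChain := h.isClosedChain.append_comm
  mem_of_forall_mem _ hl hsub _ hv hvM :=
    List.perm_append_comm.mem_iff.1 (h.mem_of_forall_mem hl
      (fun x hx => hsub x (List.perm_append_comm.mem_iff.1 hx)) hv hvM)

lemma not_canInsert (h : IsMaximalClosedChain r M (L ++ g)) (hL : IsPathFromTo r L b a)
    (hv : v ∉ L ++ g) (hvM : v ∈ M) : ¬ CanInsert r L v := by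
  intro hins
  obtain ⟨L', hL', hperm⟩ := hins.exists_isPathFromTo hL fun hvL => hv (List.mem_append_left _ hvL)
  have hperm' : (L' ++ g).Perm (v :: (L ++ g)) := hperm.append_right g
  obtain ⟨hnd, hc⟩ := (isClosedChain_append_iff hL).1 h.isClosedChain
  have hclosed : IsClosedChain r (L' ++ g) :=
    (isClosedChain_append_iff hL').2 ⟨hperm'.nodup_iff.2 (List.nodup_cons.2 ⟨hv, hnd⟩), hc⟩
  exact hv (h.mem_of_forall_mem hclosed
    (fun x hx _ => hperm'.mem_iff.2 (List.mem_cons_of_mem v hx))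
    (hperm'.mem_iff.2 List.mem_cons_self) hvM)

variable [DecidableEq V]

lemma exists_mem_not_canInsert (h : IsMaximalClosedChain r M (L ++ g))
    (hL : IsPathFromTo r L b a) (hQ : IsDetour r (L ++ g).toFinset M a b Q) :
    ∃ c ∈ g, c ∈ M ∧ ∃ P, P.Nodup ∧ L ⊆ P ∧ P ⊆ L ++ g ∧ ¬ CanInsert r P c := by
  obtain ⟨P, hP, hLP, hPg, hPsat⟩ := exists_isPathFromTo_forall_not_canInsert g.toFinset hL
  have hPC : P ⊆ L ++ g := fun x hx => by simpa using hPg x hx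
  suffices ∃ c ∈ g, c ∈ M ∧ c ∉ P by
    obtain ⟨c, hcg, hcM, hcP⟩ := this
    exact ⟨c, hcg, hcM, P, hP.1.2.1, hLP, hPC, hPsat c (List.mem_toFinset.2 hcg) hcP⟩
  by_contra! hcon
  have hQC : ∀ x ∈ Q, x ∉ L ++ g := fun x hx => List.mem_toFinset.not.1 (hQ.notMem x hx)
  have hclosed : IsClosedChain r (P ++ Q) := (isClosedChain_append_iff hP).2
    ⟨List.Nodup.append hP.1.2.1 hQ.nodup fun x hxP hxQ => hQC x hxQ (hPC hxP), hQ.isChain⟩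
  obtain ⟨v, hvQ, hvM⟩ := hQ.exists_mem
  refine hQC v hvQ (h.mem_of_forall_mem hclosed (fun x hx hxM => ?_)
    (List.mem_append_right _ hvQ) hvM)
  exact List.mem_append_left _ ((List.mem_append.1 hx).elim (@hLP x) fun hxg => hcon x hxg hxM)

variable [Fintype V] (hM : Mᶜ.Subsingleton) (hdeg : ∀ v ∈ M, Fintype.card V + 2 ≤ deg r v)

include hM hdeg

lemma not_isDetour_of_forall_gap (h : IsMaximalClosedChain r M (L ++ g)) (hL : IsPathFromTo r L b a)
    (hexit : ∀ c ∈ g, ∀ Q, ¬ IsDetour r (L ++ g).toFinset M a c Q)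
    (henter : ∀ c ∈ g, ∀ Q, ¬ IsDetour r (L ++ g).toFinset M c b Q) :
    ¬ IsDetour r (L ++ g).toFinset M a b Q := by
  intro hQ
  obtain ⟨v, hvQ, hvM⟩ := hQ.exists_mem
  obtain ⟨c, hcg, hcM, P, hP, hLP, hPC, hPc⟩ := h.exists_mem_not_canInsert hL hQ
  have hvL := h.not_canInsert hL (List.mem_toFinset.not.1 (hQ.notMem v hvQ)) hvM
  set S := (L ++ g).toFinset with hS
  -- The degrees of `v` and `c` add up to at most `2n + 3`.
  have hv : ∑ u ∈ S, arcCount r v u ≤ L.length + 1 := by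
    refine le_of_eq_of_le (Eq.symm ?_) (sum_arcCount_le_length_add_one hL.1.2.1 hvL)
    refine sum_subset (by simp [hS]) fun u huS huL => ?_
    have hug : u ∈ g := by simp_all
    exact hQ.arcCount_eq_zero (hexit u hug) (henter u hug) hvQ hvM
  have hPS : P.toFinset ⊆ S := fun x hx => List.mem_toFinset.2 (hPC (List.mem_toFinset.1 hx))
  have hc : ∑ u ∈ S, arcCount r c u ≤ 2 * #(S \ P.toFinset) + (P.length + 1) := by
    rw [← sum_sdiff hPS]
    exact add_le_add (sum_arcCount_le r c _) (sum_arcCount_le_length_add_one hP hPc)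
  have hcompl := hQ.sum_arcCount_compl_le (hexit c hcg) (henter c hcg) hM hvQ hvM
  have hLP_length : L.length ≤ P.length := (hL.1.2.1.subperm hLP).length_le
  have hcard_P : #(S \ P.toFinset) + P.length = #S := by
    rw [← List.toFinset_card_of_nodup hP, card_sdiff_add_card_eq_card hPS]
  have hcard : #S + #Sᶜ = Fintype.card V := card_add_card_compl S
  have hdv := hdeg v hvM
  have hdc := hdeg c hcM
  rw [← sum_arcCount, ← sum_add_sum_compl S] at hdv hdc
  omega

-- A detour to or from a vertex `c` of the gap `g` is one for a longer segment ending or beginning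
-- at `c`, whose gap is shorter.
theorem not_isDetour_of_append (h : IsMaximalClosedChain r M (L ++ g)) (hb : L.head? = some b)
    (ha : L.getLast? = some a) : ¬ IsDetour r (L ++ g).toFinset M a b Q := by
  induction hk : g.length using Nat.strong_induction_on generalizing L g a b Q with
  | _ k ih =>
    refine h.not_isDetour_of_forall_gap hM hdeg (h.isClosedChain.isPathFromTo hb ha) ?_ ?_
    · intro c hc Q hQ
      obtain ⟨g₁, g₂, rfl⟩ := List.append_of_mem hc
      rw [List.length_append, List.length_cons] at hk
      have h' : IsMaximalClosedChain r M ((c :: g₂ ++ L) ++ g₁) := by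
        have : IsMaximalClosedChain r M ((L ++ g₁) ++ c :: g₂) := by simpa using h
        simpa using this.append_comm
      have hperm : (c :: g₂ ++ L ++ g₁).Perm (L ++ (g₁ ++ c :: g₂)) := by
        simpa using (List.perm_append_comm (l₁ := L ++ g₁) (l₂ := c :: g₂)).symm
      rw [← List.toFinset_eq_of_perm _ _ hperm] at hQ
      exact ih g₁.length (by omega) h' rfl (by rw [List.getLast?_append, ha, Option.some_or]) rfl hQ
    · intro c hc Q hQ
      obtain ⟨g₁, g₂, rfl⟩ := List.append_of_mem hc
      rw [List.length_append, List.length_cons] at hk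
      have h' : IsMaximalClosedChain r M ((L ++ g₁ ++ [c]) ++ g₂) := by simpa using h
      exact ih g₂.length (by omega) (b := b) h' (by simp [hb]) List.getLast?_concat rfl
        (by simpa using hQ)

theorem not_isDetour (h : IsMaximalClosedChain r M C) (ha : a ∈ C) (hb : b ∈ C) :
    ¬ IsDetour r C.toFinset M a b Q := by
  obtain ⟨l₁, l₂, rfl⟩ := List.append_of_mem hb
  have hrot := h.append_comm
  have hmem : a ∈ b :: l₂ ++ l₁ := List.perm_append_comm.mem_iff.1 ha
  obtain ⟨L, g, hLg⟩ := List.append_of_mem hmem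
  have hLg : b :: l₂ ++ l₁ = (L ++ [a]) ++ g := by simpa using hLg
  have hhead : (L ++ [a]).head? = some b := by simpa using (congrArg List.head? hLg).symm
  rw [List.toFinset_eq_of_perm _ _ List.perm_append_comm, hLg]
  rw [hLg] at hrot
  exact hrot.not_isDetour_of_append hM hdeg hhead (by simp)

omit [DecidableEq V] in
theorem arcCount_eq_zero (hconn : StronglyConnected r) (h : IsMaximalClosedChain r M C)
    (hv : v ∉ C) (hvM : v ∈ M) (hc : c ∈ C) : arcCount r v c = 0 := by
  classical
  rw [← List.mem_toFinset] at hv hc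
  refine _root_.arcCount_eq_zero (fun hvc => ?_) fun hcv => ?_
  · obtain ⟨y, hy, Q, hQ⟩ := exists_isDetour hconn.flip hc hv hvM hvc
    exact h.not_isDetour hM hdeg (List.mem_toFinset.1 hy) (List.mem_toFinset.1 hc) hQ.reverse
  · obtain ⟨y, hy, Q, hQ⟩ := exists_isDetour hconn hc hv hvM hcv
    exact h.not_isDetour hM hdeg (List.mem_toFinset.1 hc) (List.mem_toFinset.1 hy) hQ

omit [DecidableEq V] in
theorem mem_of_mem (hconn : StronglyConnected r) (h : IsMaximalClosedChain r M C) (hc : c ∈ C)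
    (hcM : c ∈ M) (hvM : v ∈ M) : v ∈ C := by
  classical
  by_contra hvC
  have hzero : ∀ u ∉ C, u ∈ M → ∀ s ∈ C, arcCount r u s = 0 := fun _ hu huM _ hs =>
    h.arcCount_eq_zero hM hdeg hconn hu huM hs
  set S := C.toFinset with hS
  have hv : ∑ u ∈ S, arcCount r v u = 0 :=
    sum_eq_zero fun u hu => hzero v hvC hvM u (List.mem_toFinset.1 hu)
  have hcompl : ∑ u ∈ Sᶜ, arcCount r c u ≤ 2 := by
    calc ∑ u ∈ Sᶜ, arcCount r c u = ∑ u ∈ Sᶜ with u ∉ M, arcCount r c u := by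
          refine (sum_filter_of_ne (p := (· ∉ M)) fun u hu hne huM => hne ?_).symm
          rw [arcCount_comm]
          exact hzero u (by simpa [hS] using hu) huM c hc
      _ ≤ 2 * #{u ∈ Sᶜ | u ∉ M} := sum_arcCount_le r c _
      _ ≤ 2 * 1 := by
          gcongr
          exact card_le_one.2 fun x hx y hy => hM (mem_filter.1 hx).2 (mem_filter.1 hy).2
  have hvcompl := sum_arcCount_le r v Sᶜ
  have hcS := sum_arcCount_le r c S
  have hcard : #S + #Sᶜ = Fintype.card V := card_add_card_compl S
  have hdv := hdeg v hvM
  have hdc := hdeg c hcM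
  rw [← sum_arcCount, ← sum_add_sum_compl S] at hdv hdc
  omega

end IsMaximalClosedChain

theorem exists_isClosedChain_forall_mem [Fintype V] [Std.Refl r] (hM : Mᶜ.Subsingleton)
    (hdeg : ∀ v ∈ M, Fintype.card V + 2 ≤ deg r v) (hconn : StronglyConnected r) :
    ∃ C, IsClosedChain r C ∧ ∀ v ∈ M, v ∈ C := by
  classical
  rcases M.eq_empty_or_nonempty with rfl | ⟨x, hx⟩
  · exact ⟨[], by simp [IsClosedChain], by simp⟩
  have hsingle : IsClosedChain r [x] := by simp [IsClosedChain, refl]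
  obtain ⟨C, hC, hxC⟩ := exists_isMaximalClosedChain M hsingle
  exact ⟨C, hC.isClosedChain, fun v hv =>
    hC.mem_of_mem hM hdeg hconn (hxC x List.mem_cons_self hx) hx hv⟩

end MaximalClosedChains

/-- Corollary 1. -/
theorem hamiltonian_or_long_cycle_of_degrees [Fintype V] (A : V → V → Prop)
    (hloops : ∀ v, ¬ A v v)
    (hn : 3 ≤ Fintype.card V) (hconn : StronglyConnected A)
    (hdeg : Fintype.card V - 1 ≤ {v : V | Fintype.card V ≤ deg A v}.ncard) :
    (∃ l : List V, IsCycleOn A l ∧ ∀ v : V, v ∈ l) ∨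
      ∃ l : List V, IsCycleOn A l ∧ l.length = Fintype.card V - 1 := by
  classical
  set M : Set V := {v | Fintype.card V ≤ deg A v}
  have hM : Mᶜ.Subsingleton := by
    have := Set.ncard_add_ncard_compl M
    rw [Nat.card_eq_fintype_card] at this
    exact Set.ncard_le_one_iff_subsingleton.1 (by omega)
  obtain ⟨l, hl, hMl⟩ := exists_isClosedChain_forall_mem (r := Relation.ReflGen A) hM
    (fun v hv => (Nat.add_le_add_right hv 2).trans_eq (deg_reflGen (hloops v)).symm)
    (hconn.mono fun _ _ => Relation.ReflGen.single)
  have hlength : Fintype.card V - 1 ≤ l.length := hdeg.trans <| by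
    rw [← List.toFinset_card_of_nodup hl.1, ← Set.ncard_coe_finset]
    exact Set.ncard_le_ncard fun v hv => List.mem_toFinset.2 (hMl v hv)
  have hcycle : IsCycleOn A l := hl.isCycleOn (by omega)
  rcases hl.1.length_le_card.eq_or_lt with hfull | hlt
  · refine Or.inl ⟨l, hcycle, fun v => List.mem_toFinset.1 ?_⟩
    rw [(card_eq_iff_eq_univ _).1 ((List.toFinset_card_of_nodup hl.1).trans hfull)]
    exact mem_univ v
  · exact Or.inr ⟨l, hcycle, by omega⟩
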